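/- Let f : S → ℂ be a solution of the integral Kannappan equation. Then Σ_{i∈I} c_i f(z_i) ≠ 0 if and only if f is not identically zero. -/

import Mathlib

/-!
Write `x⋆` for the image of `x` under the involution and `g x = ∫ f (x t) dμ(t)`, so that the
equation reads `g (x y) + g (x y⋆) = 2 f x f y`. The left side is symmetric in `y` and `y⋆`, so
`f` is even. For central `z`, computing `g (x y z) + g (x y z⋆) + g (x y⋆ z) + g (x y⋆ z⋆)` in two
ways gives `f z (f (x y) + f (x y⋆)) = (f (x z) + f (x⋆ z)) f y`, and integrating over `z` yields
`(∫ f dμ) (f (x y) + f (x y⋆)) = (g x + g x⋆) f y`. If `∫ f dμ = 0` and `f ≠ 0`, then `g` is odd.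
Hence `g (x x⋆) = 0`, so `2 (f x)² = g (x²) = -g ((x⋆)²) = -2 (f x⋆)² = -2 (f x)²` and `f = 0`.
-/

open Set

section

variable {S R : Type*} [CommRing R]

/-- The functional equation `g (x y) + g (x y⋆) = 2 f x f y`. The integral Kannappan equation for
`f` is the case `g x = ∫ f (x t) dμ(t)`. -/
def KannappanPair [Mul S] [Star S] (f g : S → R) : Prop :=
  ∀ x y, g (x * y) + g (x * star y) = 2 * f x * f y

namespace KannappanPair

variable [NoZeroDivisors R] [NeZero (2 : R)] {f g : S → R}

theorem map_star [Mul S] [InvolutiveStar S] (h : KannappanPair f g) (x : S) :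
    f (star x) = f x := by
  have two_mul_mul_sub (w : S) : 2 * f w * (f (star x) - f x) = 0 := by
    have hx := h w x
    have hx_star := h w (star x)
    rw [star_star] at hx_star
    linear_combination hx - hx_star
  have sq_sub : 2 * (f (star x) - f x) ^ 2 = 0 := by
    linear_combination two_mul_mul_sub (star x) - two_mul_mul_sub x
  simpa [two_ne_zero, sub_eq_zero] using sq_sub

theorem eq_zero_of_odd [Mul S] [StarMul S] (h : KannappanPair f g)
    (hg : ∀ x, g (star x) = -g x) : f = 0 := by
  have map_eq_zero {w : S} (hw : IsSelfAdjoint w) : g w = 0 := by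
    have two_mul_map : 2 * g w = 0 := by
      have := hg w
      rw [hw.star_eq] at this
      linear_combination this
    simpa [two_ne_zero] using two_mul_map
  have map_mul_self (x : S) : g (x * x) = 2 * f x ^ 2 := by
    linear_combination h x x - map_eq_zero (IsSelfAdjoint.mul_star_self x)
  funext x
  have map_star_mul_self : g (star x * star x) = -g (x * x) := by rw [← star_mul, hg]
  have sq_eq_zero : 2 * (2 * f x ^ 2) = 0 := by
    rw [map_mul_self, map_mul_self, h.map_star] at map_star_mul_self
    linear_combination map_star_mul_self
  simpa [two_ne_zero] using sq_eq_zero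

theorem map_mul_add_of_mem_center [Semigroup S] [StarMul S] (h : KannappanPair f g)
    {z : S} (hz : z ∈ center S) (x y : S) :
    f z * (f (x * y) + f (x * star y)) = (f (x * z) + f (star x * z)) * f y := by
  have shift {w : S} (hw : w ∈ center S) :
      g (x * y * w) + g (x * star y * w) = 2 * f (x * w) * f y := by
    have hcomm := Semigroup.mem_center_iff.mp hw
    rw [← h, mul_assoc x y, hcomm y, mul_assoc x (star y), hcomm (star y), mul_assoc, mul_assoc]
  have map_mul_star : f (x * star z) = f (star x * z) := by
    rw [← h.map_star, star_mul, star_star, Semigroup.mem_center_iff.mp hz]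
  refine mul_left_cancel₀ (two_ne_zero (α := R)) ?_
  rw [← map_mul_star]
  linear_combination shift hz + shift (star_mem_center hz) - h (x * y) z - h (x * star y) z

end KannappanPair

/-- The integral over a measure carried by the center is modelled by a linear functional whose
value depends only on the restriction of a function to the center. -/
theorem stmt_13_general [Semigroup S] [StarMul S] [NoZeroDivisors R] [NeZero (2 : R)]
    (L : (S → R) →ₗ[R] R) (hL : ∀ h k : S → R, EqOn h k (center S) → L h = L k) (f : S → R)
    (hK : ∀ x y, L (fun z ↦ f (x * y * z)) + L (fun z ↦ f (x * star y * z)) = 2 * f x * f y) :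
    L f ≠ 0 ↔ f ≠ 0 := by
  refine ⟨fun hLf hf ↦ hLf (hf ▸ map_zero L), fun hf hLf ↦ hf ?_⟩
  let g (x : S) : R := L fun z ↦ f (x * z)
  have hpair : KannappanPair f g := hK
  have averaged (x y : S) : L f * (f (x * y) + f (x * star y)) = (g x + g (star x)) * f y := by
    have eqOn_center : EqOn ((f (x * y) + f (x * star y)) • f)
        (f y • ((fun z ↦ f (x * z)) + fun z ↦ f (star x * z))) (center S) := fun z hz ↦ by
      simpa [mul_comm] using hpair.map_mul_add_of_mem_center hz x y
    simpa [g, mul_comm, mul_add] using hL _ _ eqOn_center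
  obtain ⟨a, ha⟩ := Function.ne_iff.mp hf
  refine hpair.eq_zero_of_odd fun x ↦ ?_
  have : (g x + g (star x)) * f a = 0 := by rw [← averaged, hLf, zero_mul]
  exact eq_neg_of_add_eq_zero_right ((mul_eq_zero.mp this).resolve_right ha)

/-- Integration against the measure `∑ i ∈ I, c i δ_{z i}`, as a linear functional on all
functions `S → R`. -/
def diracCombination {ι : Type*} (I : Finset ι) (c : ι → R) (z : ι → S) : (S → R) →ₗ[R] R where
  toFun h := ∑ i ∈ I, c i * h (z i)
  map_add' h k := by simp [mul_add, Finset.sum_add_distrib]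
  map_smul' r h := by simp [Finset.mul_sum, mul_left_comm]

theorem diracCombination_congr {ι : Type*} {I : Finset ι} (c : ι → R) {z : ι → S} {A : Set S}
    (hz : ∀ i ∈ I, z i ∈ A) {h k : S → R} (hhk : EqOn h k A) :
    diracCombination I c z h = diracCombination I c z k :=
  Finset.sum_congr rfl fun i hi ↦ by rw [hhk (hz i hi)]

end

theorem stmt_13 {S ι : Type*} [Semigroup S] (τ : S → S)
    (hτmul : ∀ x y : S, τ (x * y) = τ y * τ x)
    (hτinv : ∀ x : S, τ (τ x) = x)
    (I : Finset ι) (c : ι → ℂ) (z : ι → S)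
    (hz : ∀ i ∈ I, ∀ s : S, z i * s = s * z i)
    (f : S → ℂ)
(hK : ∀ x y : S,
      (∑ i ∈ I, c i * f (x * y * z i)) + (∑ i ∈ I, c i * f (x * τ y * z i))
        = 2 * f x * f y) :
    (∑ i ∈ I, c i * f (z i)) ≠ 0 ↔ f ≠ 0 := by
  let _ : StarMul S := { star := τ, star_involutive := hτinv, star_mul := hτmul }
  exact stmt_13_general (diracCombination I c z) (fun _ _ ↦ diracCombination_congr c fun i hi ↦
    Semigroup.mem_center_iff.mpr fun s ↦ (hz i hi s).symm) f hK
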